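/- Let μ be an even isotropic measure on S^{n-1}, C = conv(supp μ), and H ∈ G_{n,k}. Then W(C° ∩ H) ≤ √(n/k) · W(B_∞^k), with equality if and only if C° ∩ H = √(n/k) B_∞^k, where B_∞^k is the unit cube in H. -/

import Mathlib

open MeasureTheory
open scoped RealInnerProductSpace ENNReal Pointwise

/-- The support of a measure. -/
def msupport {α : Type*} [TopologicalSpace α] [MeasurableSpace α] (μ : Measure α) : Set α :=
  {x | ∀ U ∈ nhds x, 0 < μ U}

/-- Support function `h_K(x) = sup {⟨x,y⟩ : y ∈ K}`. -/
noncomputable def suppFn {n : ℕ} (K : Set (EuclideanSpace ℝ (Fin n)))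
    (x : EuclideanSpace ℝ (Fin n)) : ℝ :=
  sSup ((fun y => ⟪x, y⟫) '' K)

/-- The volume `ω_k` of the `k`-dimensional Euclidean unit ball. -/
noncomputable def omegaBall (k : ℕ) : ℝ :=
  (volume (Metric.ball (0 : EuclideanSpace ℝ (Fin k)) 1)).toReal

/-- The mean width of a body contained in a `k`-dimensional subspace `H`, computed within `H`. -/
noncomputable def meanWidthIn {n : ℕ} (H : Submodule ℝ (EuclideanSpace ℝ (Fin n))) (k : ℕ)
    (K : Set (EuclideanSpace ℝ (Fin n))) : ℝ :=
  (2 / (k * omegaBall k)) *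
    ∫ u in Metric.sphere (0 : EuclideanSpace ℝ (Fin n)) 1 ∩
      (H : Set (EuclideanSpace ℝ (Fin n))), suppFn K u ∂(μH[(k : ℝ) - 1])

/-- The polar body `K° = {x : ⟨x,y⟩ ≤ 1 for all y ∈ K}`. -/
def polarBody {n : ℕ} (K : Set (EuclideanSpace ℝ (Fin n))) : Set (EuclideanSpace ℝ (Fin n)) :=
  {x | ∀ y ∈ K, ⟪x, y⟫ ≤ 1}

/-- `S` is a unit cube `B_∞^k` in `H`: `{x ∈ H : |⟨x, v_i⟩| ≤ 1}` for an orthonormal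
family `(v_i)` in `H`. -/
def IsCube {n : ℕ} (H : Submodule ℝ (EuclideanSpace ℝ (Fin n))) (k : ℕ)
    (S : Set (EuclideanSpace ℝ (Fin n))) : Prop :=
  ∃ v : Fin k → EuclideanSpace ℝ (Fin n),
    Orthonormal ℝ v ∧ (∀ i, v i ∈ H) ∧
    S = {x | x ∈ H ∧ ∀ i, |⟪x, v i⟫| ≤ 1}

/-!
Let `ν` be the push-forward of `μ` to `H` under the orthogonal projection. It is isotropic in `H`
and has the mass of `μ`, and `C° ∩ H` is the polar `K` of the symmetric hull of `supp ν`. For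
`y ∈ K`, isotropy gives `⟪x, y⟫ = ∫ ⟪x, u⟫ ⟪y, u⟫ dν ≤ ∫ |⟪x, u⟫| dν`, so `h_K` is at most the
cosine transform of `ν`. By Fubini and rotation invariance, integrating the latter over the unit
sphere of `H` gives a multiple of `∫ ‖u‖ dν`, which Cauchy-Schwarz bounds through
`∫ ‖u‖ ^ 2 dν = dim H` and the mass of `ν`. The support function `∑ |⟪v_i, x⟫|` of a
cube is itself a cosine transform, and its average is computed the same way.

Put `R = √(ν(H) / dim H)`. In the equality case `R • supp ν` consists of unit vectors, and every
`s ∈ R • supp ν` has `∫ |⟪s, u⟫| dν = h_K(s) ≤ R`, that is `∫ |⟪s, R u⟫| (1 - |⟪s, R u⟫|) dν ≤ 0`.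
Hence distinct vectors of `R • supp ν` are orthogonal or opposite: up to scaling, `supp ν` is the
vertex set of a cross-polytope, whose polar is a cube.
-/

section Polar

open Module

variable {F : Type*} [NormedAddCommGroup F] [InnerProductSpace ℝ F]

/-- The support function `h_K(x) = sup {⟪x, y⟫ : y ∈ K}` in an arbitrary inner product space; on
`EuclideanSpace ℝ (Fin n)` it is `suppFn`. -/
noncomputable def supportFun (K : Set F) (x : F) : ℝ := sSup ((fun y => ⟪x, y⟫) '' K)

/-- The unit cube `B_∞` spanned by an orthonormal basis. -/
def cube {ι : Type*} [Fintype ι] (b : OrthonormalBasis ι ℝ F) : Set F := {x | ∀ i, |⟪b i, x⟫| ≤ 1}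

lemma supportFun_le {K : Set F} (hK : K.Nonempty) {x : F} {a : ℝ} (h : ∀ y ∈ K, ⟪x, y⟫ ≤ a) :
    supportFun K x ≤ a :=
  csSup_le (hK.image _) (Set.forall_mem_image.2 h)

lemma inner_le_supportFun {K : Set F} (hK : Bornology.IsBounded K) (x : F) {y : F} (hy : y ∈ K) :
    ⟪x, y⟫ ≤ supportFun K x :=
  le_csSup ((innerSL ℝ x).lipschitz.isBounded_image hK).bddAbove (Set.mem_image_of_mem _ hy)

lemma continuous_supportFun {K : Set F} (hK : Bornology.IsBounded K) (hne : K.Nonempty) :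
    Continuous (supportFun K) := by
  obtain ⟨R, hR⟩ := hK.exists_norm_le
  refine (LipschitzWith.of_le_add_mul' R fun x z => supportFun_le hne fun y hy => ?_).continuous
  calc ⟪x, y⟫ = ⟪z, y⟫ + ⟪x - z, y⟫ := by rw [inner_sub_left]; ring
    _ ≤ supportFun K z + ‖x - z‖ * ‖y‖ :=
      add_le_add (inner_le_supportFun hK z hy) (real_inner_le_norm _ _)
    _ ≤ supportFun K z + R * dist x z := by
      rw [dist_eq_norm, mul_comm R]
      gcongr
      exact hR y hy

lemma supportFun_smul {r : ℝ} (hr : 0 ≤ r) (K : Set F) (x : F) :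
    supportFun (r • K) x = r * supportFun K x := by
  have himage : (fun y => ⟪x, y⟫) '' (r • K) = r • (fun y => ⟪x, y⟫) '' K :=
    Set.image_smul_comm _ _ _ fun y => real_inner_smul_right x y r
  rw [supportFun, himage, Real.sSup_smul_of_nonneg hr, smul_eq_mul, supportFun]

lemma supportFun_cube {ι : Type*} [Fintype ι] (b : OrthonormalBasis ι ℝ F) (x : F) :
    supportFun (cube b) x = ∑ i, |⟪b i, x⟫| := by
  have hinner (y : F) : ⟪x, y⟫ = ∑ i, ⟪b i, x⟫ * ⟪b i, y⟫ := by
    simp_rw [← b.sum_inner_mul_inner x y, real_inner_comm x]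
  refine IsGreatest.csSup_eq ⟨?_, Set.forall_mem_image.2 fun y hy => ?_⟩
  · have hcoord (i : ι) : ⟪b i, ∑ j, (SignType.sign ⟪b j, x⟫ : ℝ) • b j⟫ = SignType.sign ⟪b i, x⟫ :=
      b.orthonormal.inner_right_fintype _ i
    refine ⟨∑ j, (SignType.sign ⟪b j, x⟫ : ℝ) • b j, fun i => ?_, ?_⟩
    · rw [hcoord]
      cases SignType.sign ⟪b i, x⟫ <;> simp
    · simp only [hinner, hcoord, self_mul_sign]
  · rw [hinner]
    refine Finset.sum_le_sum fun i _ => (le_abs_self _).trans ?_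
    rw [abs_mul]
    exact mul_le_of_le_one_right (abs_nonneg _) (hy i)

lemma mem_smul_cube_iff {ι : Type*} [Fintype ι] {b : OrthonormalBasis ι ℝ F} {r : ℝ} (hr : 0 < r)
    {x : F} : x ∈ r • cube b ↔ ∀ i, |⟪b i, x⟫| ≤ r := by
  rw [Set.mem_smul_set_iff_inv_smul_mem₀ hr.ne']
  refine forall_congr' fun i => ?_
  rw [real_inner_smul_right, abs_mul, abs_of_pos (inv_pos.2 hr), inv_mul_le_one₀ hr]

lemma exists_orthonormalBasis_subset [FiniteDimensional ℝ F] {T : Set F}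
    (hspan : Submodule.span ℝ T = ⊤) (hunit : ∀ t ∈ T, ‖t‖ = 1)
    (horth : T.Pairwise fun s t => ⟪s, t⟫ = 0 ∨ s = -t) :
    ∃ b : OrthonormalBasis (Fin (finrank ℝ F)) ℝ F,
      (∀ i, b i ∈ T) ∧ ∀ t ∈ T, ∃ i, t = b i ∨ t = -b i := by
  obtain ⟨B, hBT, hBspan, hBindep⟩ := exists_linearIndependent ℝ T
  have hB : Orthonormal ℝ (Subtype.val : B → F) := by
    refine ⟨fun s => hunit s (hBT s.2), fun s t hst => ?_⟩
    refine (horth (hBT s.2) (hBT t.2) (Subtype.coe_injective.ne hst)).resolve_right fun hneg => ?_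
    refine hBindep.notMem_span_image (s := {t}) (x := s) hst ?_
    rw [hneg]
    exact neg_mem (Submodule.subset_span ⟨t, rfl, rfl⟩)
  have := hBindep.finite
  have := Fintype.ofFinite B
  let b₀ := OrthonormalBasis.mk hB (by rw [Subtype.range_coe, hBspan, hspan])
  let b := b₀.reindex (Fintype.equivFinOfCardEq (finrank_eq_card_basis b₀.toBasis).symm)
  have hbT (i) : b i ∈ T := by simpa [b, b₀] using hBT (Subtype.coe_prop _)
  refine ⟨b, hbT, fun t ht => ?_⟩
  obtain ⟨i, -, hi⟩ := Finset.exists_ne_zero_of_sum_ne_zero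
    (show ∑ i, ⟪b i, t⟫ ^ 2 ≠ 0 by rw [b.sum_sq_inner_right, hunit t ht]; norm_num)
  refine ⟨i, or_iff_not_imp_left.2 fun hne => (horth ht (hbT i) hne).resolve_left fun h => hi ?_⟩
  rw [real_inner_comm, h, zero_pow two_ne_zero]

end Polar

section CosineTransform

variable {F : Type*} [NormedAddCommGroup F] [InnerProductSpace ℝ F] [MeasurableSpace F]
  {μ ν : Measure F}

/-- The cosine transform of a measure, which is the support function of the zonoid
generated by it. -/
noncomputable def cosineTransform (μ : Measure F) (x : F) : ℝ := ∫ u, |⟪x, u⟫| ∂μ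

/-- The polar of the symmetric convex hull of the support of `μ`. Asking `|⟪x, u⟫| ≤ 1` only almost
everywhere makes the definition commute with push-forwards. -/
def essPolar (μ : Measure F) : Set F := {x | ∀ᵐ u ∂μ, |⟪x, u⟫| ≤ 1}

lemma zero_mem_essPolar (μ : Measure F) : 0 ∈ essPolar μ := by simp [essPolar]

lemma integral_supportFun_cube {ι : Type*} [Fintype ι] (b : OrthonormalBasis ι ℝ F)
    (hμ : Integrable (fun u => u) μ) :
    ∫ x, supportFun (cube b) x ∂μ = ∑ i, cosineTransform μ (b i) := by
  simp_rw [supportFun_cube]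
  exact integral_finsetSum _ fun i _ => (hμ.const_inner (b i)).abs

lemma mem_essPolar_iff_forall_support [FiniteDimensional ℝ F] {x : F} :
    x ∈ essPolar μ ↔ ∀ u ∈ μ.support, |⟪x, u⟫| ≤ 1 := by
  have := FiniteDimensional.proper_real F
  have hclosed : IsClosed {u : F | |⟪x, u⟫| ≤ 1} := isClosed_le (by fun_prop) continuous_const
  refine ⟨fun h => Measure.support_subset_of_isClosed hclosed h, fun h => ?_⟩
  filter_upwards [Measure.support_mem_ae] with u hu using h u hu

lemma continuous_cosineTransform (hμ : Integrable (fun u => u) μ) :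
    Continuous (cosineTransform μ) := by
  refine (LipschitzWith.of_le_add_mul' (∫ u, ‖u‖ ∂μ) fun x z => ?_).continuous
  rw [dist_eq_norm, mul_comm, cosineTransform, cosineTransform, ← integral_const_mul,
    ← integral_add (hμ.const_inner z).abs (hμ.norm.const_mul _)]
  refine integral_mono (hμ.const_inner x).abs ((hμ.const_inner z).abs.add (hμ.norm.const_mul _))
    fun u => ?_
  calc |⟪x, u⟫| = |⟪z, u⟫ + ⟪x - z, u⟫| := by rw [inner_sub_left]; ring_nf
    _ ≤ |⟪z, u⟫| + |⟪x - z, u⟫| := abs_add_le _ _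
    _ ≤ |⟪z, u⟫| + ‖x - z‖ * ‖u‖ := by gcongr; exact abs_real_inner_le_norm _ _

variable [BorelSpace F] [FiniteDimensional ℝ F]

lemma mem_essPolar_map_orthogonalProjectionOnto {H : Submodule ℝ F} {x : H} :
    x ∈ essPolar (μ.map H.orthogonalProjectionOnto) ↔ (x : F) ∈ essPolar μ := by
  change (∀ᵐ u ∂_, |⟪x, u⟫| ≤ 1) ↔ _
  rw [ae_map_iff (by fun_prop) (measurableSet_le (by fun_prop) (by fun_prop))]
  simp only [Submodule.inner_orthogonalProjectionOnto_eq_of_mem_left]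
  rfl

lemma integral_cosineTransform_comm [SFinite μ] [SFinite ν] (hμ : Integrable (fun u => u) μ)
    (hν : Integrable (fun u => u) ν) :
    ∫ x, cosineTransform μ x ∂ν = ∫ u, cosineTransform ν u ∂μ := by
  have hint : Integrable (Function.uncurry fun x u : F => |⟪x, u⟫|) (ν.prod μ) := by
    refine (hν.norm.mul_prod hμ.norm).mono' ?_ (.of_forall fun z => ?_)
    · exact (by fun_prop : Continuous fun z : F × F => |⟪z.1, z.2⟫|).aestronglyMeasurable
    · simpa [Function.uncurry] using abs_real_inner_le_norm z.1 z.2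
  simp only [cosineTransform]
  rw [integral_integral_swap hint]
  simp_rw [real_inner_comm]

end CosineTransform

section Isotropic

open Module

/-- Isotropy `∫ u ⊗ u dμ = Id`, encoded by its quadratic form. The measure need not live on the unit
sphere, so that isotropy passes to orthogonal projections. -/
def IsIsotropic {F : Type*} [NormedAddCommGroup F] [InnerProductSpace ℝ F] [MeasurableSpace F]
    (μ : Measure F) : Prop :=
  ∀ x, ∫ u, ⟪x, u⟫ ^ 2 ∂μ = ‖x‖ ^ 2

namespace IsIsotropic

variable {F : Type*} [NormedAddCommGroup F] [InnerProductSpace ℝ F] [MeasurableSpace F]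
  {μ : Measure F} {R : ℝ}

lemma integrable_inner_sq (hμ : IsIsotropic μ) (x : F) : Integrable (fun u => ⟪x, u⟫ ^ 2) μ := by
  rcases eq_or_ne x 0 with rfl | hx
  · simp
  · exact .of_integral_ne_zero (by rw [hμ x]; positivity)

lemma norm_sq_le_of_mem_essPolar [IsFiniteMeasure μ] (hμ : IsIsotropic μ) {x : F}
    (hx : x ∈ essPolar μ) : ‖x‖ ^ 2 ≤ μ.real Set.univ := by
  calc ‖x‖ ^ 2 = ∫ u, ⟪x, u⟫ ^ 2 ∂μ := (hμ x).symm
    _ ≤ ∫ _, 1 ∂μ := integral_mono_ae (hμ.integrable_inner_sq x) (integrable_const 1) <| by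
      filter_upwards [hx] with u hu using (sq_le_one_iff_abs_le_one _).2 hu
    _ = μ.real Set.univ := by simp

lemma isBounded_essPolar [IsFiniteMeasure μ] (hμ : IsIsotropic μ) :
    Bornology.IsBounded (essPolar μ) :=
  isBounded_iff_forall_norm_le.2
    ⟨√(μ.real Set.univ), fun _ hx => Real.le_sqrt_of_sq_le (hμ.norm_sq_le_of_mem_essPolar hx)⟩

lemma continuous_supportFun_essPolar [IsFiniteMeasure μ] (hμ : IsIsotropic μ) :
    Continuous (supportFun (essPolar μ)) :=
  continuous_supportFun hμ.isBounded_essPolar ⟨0, zero_mem_essPolar μ⟩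

lemma measureReal_univ_pos [Nontrivial F] [IsFiniteMeasure μ] (hμ : IsIsotropic μ) :
    0 < μ.real Set.univ := by
  have : NeZero μ := ⟨by
    rintro rfl
    obtain ⟨v, hv⟩ := exists_ne (0 : F)
    simpa [hv] using (hμ v).symm⟩
  exact MeasureTheory.measureReal_univ_pos

variable [FiniteDimensional ℝ F]

lemma integrable_norm_sq (hμ : IsIsotropic μ) : Integrable (fun u => ‖u‖ ^ 2) μ := by
  simp_rw [← (stdOrthonormalBasis ℝ F).sum_sq_inner_right]
  exact integrable_finsetSum _ fun i _ => hμ.integrable_inner_sq _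

lemma integral_norm_sq (hμ : IsIsotropic μ) : ∫ u, ‖u‖ ^ 2 ∂μ = finrank ℝ F := by
  simp_rw [← (stdOrthonormalBasis ℝ F).sum_sq_inner_right]
  rw [integral_finsetSum _ fun i _ => hμ.integrable_inner_sq _]
  simp only [hμ _, OrthonormalBasis.norm_eq_one, one_pow, Finset.sum_const, Finset.card_univ,
    Fintype.card_fin, nsmul_eq_mul, mul_one]

lemma measureReal_univ_of_sphere (hμ : IsIsotropic μ) (hsph : μ (Metric.sphere 0 1)ᶜ = 0) :
    μ.real Set.univ = finrank ℝ F := by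
  rw [← hμ.integral_norm_sq]
  calc μ.real Set.univ = ∫ _, (1 : ℝ) ∂μ := by simp
    _ = ∫ u, ‖u‖ ^ 2 ∂μ := integral_congr_ae <| by
      filter_upwards [show ∀ᵐ u ∂μ, u ∈ Metric.sphere 0 1 from hsph] with u hu
      rw [mem_sphere_zero_iff_norm.1 hu, one_pow]

lemma span_support (hμ : IsIsotropic μ) : Submodule.span ℝ μ.support = ⊤ := by
  have := FiniteDimensional.proper_real F
  rw [← Submodule.orthogonal_eq_bot_iff, Submodule.eq_bot_iff]
  intro x hx
  have hzero : ∫ u, ⟪x, u⟫ ^ 2 ∂μ = 0 := integral_eq_zero_of_ae <| by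
    filter_upwards [Measure.support_mem_ae] with u hu
    rw [(Submodule.mem_orthogonal' _ _).1 hx u (Submodule.subset_span hu)]
    simp
  simpa [hμ x] using hzero

variable [BorelSpace F]

lemma map_orthogonalProjectionOnto (hμ : IsIsotropic μ) (H : Submodule ℝ F) :
    IsIsotropic (μ.map H.orthogonalProjectionOnto) := fun x => by
  rw [integral_map (by fun_prop)
    (by fun_prop : Continuous fun u => ⟪x, u⟫ ^ 2).aestronglyMeasurable]
  simp_rw [Submodule.inner_orthogonalProjectionOnto_eq_of_mem_left]
  exact hμ x

lemma integrable_id [IsFiniteMeasure μ] (hμ : IsIsotropic μ) : Integrable (fun u => u) μ :=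
  ((memLp_two_iff_integrable_sq_norm aestronglyMeasurable_id).2 hμ.integrable_norm_sq).integrable
    one_le_two

lemma integrable_inner_mul_inner (hμ : IsIsotropic μ) (x y : F) :
    Integrable (fun u => ⟪x, u⟫ * ⟪y, u⟫) μ :=
  have memLp_inner (z : F) : MemLp (fun u => ⟪z, u⟫) 2 μ :=
    (memLp_two_iff_integrable_sq (by fun_prop)).2 (hμ.integrable_inner_sq z)
  (memLp_inner x).integrable_mul (memLp_inner y)

lemma inner_eq_integral (hμ : IsIsotropic μ) (x y : F) :
    ⟪x, y⟫ = ∫ u, ⟪x, u⟫ * ⟪y, u⟫ ∂μ := by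
  have hexpand : ∫ u, ⟪x + y, u⟫ ^ 2 ∂μ =
      ‖x‖ ^ 2 + 2 * ∫ u, ⟪x, u⟫ * ⟪y, u⟫ ∂μ + ‖y‖ ^ 2 := by
    have hxy := (hμ.integrable_inner_mul_inner x y).const_mul 2
    rw [← hμ x, ← hμ y, ← integral_const_mul, ← integral_add (hμ.integrable_inner_sq x) hxy,
      ← integral_add ((hμ.integrable_inner_sq x).fun_add hxy) (hμ.integrable_inner_sq y)]
    exact integral_congr_ae (.of_forall fun u => by simp only [inner_add_left]; ring)
  have hnorm := norm_add_sq_real x y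
  linarith [hμ (x + y)]

lemma supportFun_essPolar_le [IsFiniteMeasure μ] (hμ : IsIsotropic μ) (x : F) :
    supportFun (essPolar μ) x ≤ cosineTransform μ x := by
  refine supportFun_le ⟨0, zero_mem_essPolar μ⟩ fun y hy => ?_
  rw [hμ.inner_eq_integral]
  refine integral_mono_ae (hμ.integrable_inner_mul_inner x y)
    (hμ.integrable_id.const_inner x).abs ?_
  filter_upwards [hy] with u hu
  calc ⟪x, u⟫ * ⟪y, u⟫ ≤ |⟪x, u⟫| * |⟪y, u⟫| := (le_abs_self _).trans_eq (abs_mul _ _)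
    _ ≤ |⟪x, u⟫| := mul_le_of_le_one_right (abs_nonneg _) hu

variable [IsFiniteMeasure μ]

lemma integral_mul_norm_sub_one_sq (hμ : IsIsotropic μ)
    (hR : R ^ 2 * finrank ℝ F = μ.real Set.univ) :
    ∫ u, (R * ‖u‖ - 1) ^ 2 ∂μ = 2 * R * (R * finrank ℝ F - ∫ u, ‖u‖ ∂μ) := by
  have hsq := hμ.integrable_norm_sq.const_mul (R ^ 2)
  have hnorm := hμ.integrable_id.norm.const_mul (2 * R)
  calc ∫ u, (R * ‖u‖ - 1) ^ 2 ∂μ = ∫ u, R ^ 2 * ‖u‖ ^ 2 - 2 * R * ‖u‖ + 1 ∂μ := by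
        congr with u; ring
    _ = R ^ 2 * finrank ℝ F - 2 * R * ∫ u, ‖u‖ ∂μ + μ.real Set.univ := by
        have hsub : Integrable (fun u => R ^ 2 * ‖u‖ ^ 2 - 2 * R * ‖u‖) μ := hsq.sub hnorm
        rw [integral_add hsub (integrable_const 1), integral_sub hsq hnorm,
          integral_const_mul, integral_const_mul, hμ.integral_norm_sq]
        simp
    _ = _ := by rw [← hR]; ring

lemma integral_norm_le (hμ : IsIsotropic μ) (hR0 : 0 < R)
    (hR : R ^ 2 * finrank ℝ F = μ.real Set.univ) : ∫ u, ‖u‖ ∂μ ≤ R * finrank ℝ F := by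
  have hnonneg : 0 ≤ ∫ u, (R * ‖u‖ - 1) ^ 2 ∂μ := integral_nonneg fun u => sq_nonneg _
  rw [hμ.integral_mul_norm_sub_one_sq hR] at hnonneg
  exact sub_nonneg.1 (nonneg_of_mul_nonneg_right hnonneg (by positivity))

lemma mul_norm_eq_one_of_integral_norm_eq (hμ : IsIsotropic μ)
    (hR : R ^ 2 * finrank ℝ F = μ.real Set.univ) (heq : ∫ u, ‖u‖ ∂μ = R * finrank ℝ F) :
    ∀ u ∈ μ.support, R * ‖u‖ = 1 := by
  have hzero := hμ.integral_mul_norm_sub_one_sq hR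
  rw [heq, sub_self, mul_zero] at hzero
  have hint : Integrable (fun u => (R * ‖u‖ - 1) ^ 2) μ := by
    have hmem : MemLp (fun u => R * ‖u‖ - 1) 2 μ :=
      ((memLp_two_iff_integrable_sq_norm aestronglyMeasurable_id).2
        hμ.integrable_norm_sq).norm.const_mul R |>.sub (memLp_const 1)
    exact hmem.integrable_sq
  have hae := (integral_eq_zero_iff_of_nonneg (fun u => sq_nonneg _) hint).1 hzero
  refine Measure.support_subset_of_isClosed (isClosed_eq (by fun_prop) continuous_const) ?_
  filter_upwards [hae] with u hu
  exact sub_eq_zero.1 (pow_eq_zero_iff two_ne_zero |>.1 hu)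

lemma inner_smul_eq_zero_or_abs_eq_one (hμ : IsIsotropic μ) (hR0 : 0 < R)
    (hnorm : ∀ u ∈ μ.support, R * ‖u‖ = 1) {x : F} (hx : ‖x‖ = 1)
    (hle : cosineTransform μ x ≤ R) :
    ∀ u ∈ μ.support, ⟪x, R • u⟫ = 0 ∨ |⟪x, R • u⟫| = 1 := by
  have := FiniteDimensional.proper_real F
  have habs := ((hμ.integrable_id.const_inner x).abs.const_mul R)
  have hsq := ((hμ.integrable_inner_sq x).const_mul (R ^ 2))
  have hexpand (u : F) : |⟪x, R • u⟫| * (1 - |⟪x, R • u⟫|) = R * |⟪x, u⟫| - R ^ 2 * ⟪x, u⟫ ^ 2 := by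
    rw [real_inner_smul_right, abs_mul, abs_of_pos hR0, ← sq_abs ⟪x, u⟫]
    ring
  have hint : Integrable (fun u => |⟪x, R • u⟫| * (1 - |⟪x, R • u⟫|)) μ := by
    simp_rw [hexpand]
    exact habs.sub hsq
  have hnonneg : 0 ≤ᵐ[μ] fun u => |⟪x, R • u⟫| * (1 - |⟪x, R • u⟫|) := by
    filter_upwards [Measure.support_mem_ae] with u hu
    have hone : |⟪x, R • u⟫| ≤ 1 := by
      simpa [norm_smul, abs_of_pos hR0, hx, hnorm u hu] using abs_real_inner_le_norm x (R • u)
    exact mul_nonneg (abs_nonneg _) (sub_nonneg.2 hone)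
  have hnonpos : ∫ u, |⟪x, R • u⟫| * (1 - |⟪x, R • u⟫|) ∂μ ≤ 0 := by
    simp_rw [hexpand]
    rw [integral_sub habs hsq, integral_const_mul, integral_const_mul, hμ x, hx]
    change R * cosineTransform μ x - _ ≤ 0
    nlinarith
  have hae := (integral_eq_zero_iff_of_nonneg_ae hnonneg hint).1
    (hnonpos.antisymm (integral_nonneg_of_ae hnonneg))
  intro u hu
  have hprod : |⟪x, R • u⟫| * (1 - |⟪x, R • u⟫|) = 0 :=
    Measure.support_subset_of_isClosed (isClosed_eq (by fun_prop) continuous_const) hae hu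
  refine (mul_eq_zero.1 hprod).imp abs_eq_zero.1 fun h => (sub_eq_zero.1 h).symm

lemma exists_essPolar_eq_smul_cube (hμ : IsIsotropic μ) (hR0 : 0 < R)
    (hnorm : ∀ u ∈ μ.support, R * ‖u‖ = 1)
    (hsupp : ∀ x, ‖x‖ = 1 → supportFun (essPolar μ) x = cosineTransform μ x) :
    ∃ b : OrthonormalBasis (Fin (finrank ℝ F)) ℝ F, essPolar μ = R • cube b := by
  have hunit : ∀ t ∈ R • μ.support, ‖t‖ = 1 := Set.forall_mem_image.2 fun u hu => by
    rw [norm_smul, Real.norm_of_nonneg hR0.le, hnorm u hu]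
  have hmem (x : F) : x ∈ essPolar μ ↔ ∀ t ∈ R • μ.support, |⟪t, x⟫| ≤ R := by
    rw [mem_essPolar_iff_forall_support]
    refine Iff.trans (forall₂_congr fun u _ => ?_) Set.forall_mem_image.symm
    rw [real_inner_smul_left, real_inner_comm, abs_mul, abs_of_pos hR0, mul_le_iff_le_one_right hR0]
  have hcos (t : F) (ht : t ∈ R • μ.support) : cosineTransform μ t ≤ R := by
    rw [← hsupp t (hunit t ht)]
    exact supportFun_le ⟨0, zero_mem_essPolar μ⟩ fun y hy =>
      (le_abs_self _).trans ((hmem y).1 hy t ht)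
  have hpair : (R • μ.support).Pairwise fun s t => ⟪s, t⟫ = 0 ∨ s = -t := by
    rintro s hs _ ⟨u, hu, rfl⟩ hne
    refine (hμ.inner_smul_eq_zero_or_abs_eq_one hR0 hnorm (hunit s hs) (hcos s hs) u
      hu).imp_right fun habs => ?_
    have ht := hunit _ (Set.smul_mem_smul_set hu)
    rcases (abs_eq zero_le_one).1 habs with h | h
    · exact absurd ((inner_eq_one_iff_of_norm_eq_one (hunit s hs) ht).1 h) hne
    · exact (inner_eq_neg_one_iff_of_norm_eq_one (hunit s hs) ht).1 h
  have hspan : Submodule.span ℝ (R • μ.support) = ⊤ := by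
    rw [Submodule.span_smul_eq_of_isUnit _ _ hR0.ne'.isUnit, hμ.span_support]
  obtain ⟨b, hbT, hTb⟩ := exists_orthonormalBasis_subset hspan hunit hpair
  refine ⟨b, Set.ext fun x => ?_⟩
  rw [hmem, mem_smul_cube_iff hR0]
  refine ⟨fun h i => h _ (hbT i), fun h t ht => ?_⟩
  obtain ⟨i, rfl | rfl⟩ := hTb t ht
  · exact h i
  · rw [inner_neg_left, abs_neg]
    exact h i

end IsIsotropic

end Isotropic

section Sphere

open Module Metric

lemma finrank_orthogonal_span_singleton_eq_sub_one
    {F : Type*} [NormedAddCommGroup F] [InnerProductSpace ℝ F] [FiniteDimensional ℝ F]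
    {v : F} (hv : v ≠ 0) :
    (finrank ℝ (ℝ ∙ v)ᗮ : ℝ) = finrank ℝ F - 1 := by
  rw [eq_sub_iff_add_eq', ← Submodule.finrank_add_finrank_orthogonal (ℝ ∙ v),
    finrank_span_singleton hv, Nat.cast_add, Nat.cast_one]

variable {F : Type*} [NormedAddCommGroup F] [InnerProductSpace ℝ F] [MeasurableSpace F]
  [BorelSpace F]

/-- The surface measure of the unit sphere, as a measure on the ambient space. -/
noncomputable def sphereMeasure (F : Type*) [NormedAddCommGroup F] [InnerProductSpace ℝ F]
    [MeasurableSpace F] [BorelSpace F] : Measure F :=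
  μH[(finrank ℝ F : ℝ) - 1].restrict (sphere 0 1)

variable (F) in
lemma ae_mem_sphere_sphereMeasure : ∀ᵐ x ∂sphereMeasure F, x ∈ sphere (0 : F) 1 :=
  ae_restrict_mem isClosed_sphere.measurableSet

lemma measurePreserving_sphereMeasure (f : F ≃ₗᵢ[ℝ] F) :
    MeasurePreserving f (sphereMeasure F) (sphereMeasure F) := by
  have hsphere : f ⁻¹' sphere 0 1 = sphere 0 1 := by rw [f.preimage_sphere, map_zero]
  have hf : MeasurePreserving f μH[(finrank ℝ F : ℝ) - 1] μH[(finrank ℝ F : ℝ) - 1] :=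
    f.toIsometryEquiv.measurePreserving_hausdorffMeasure _
  have hrestrict := hf.restrict_preimage (s := sphere 0 1) isClosed_sphere.measurableSet
  rwa [hsphere] at hrestrict

lemma cosineTransform_sphereMeasure_eq_of_norm_eq {x y : F} (h : ‖x‖ = ‖y‖) :
    cosineTransform (sphereMeasure F) x = cosineTransform (sphereMeasure F) y := by
  let f := (ℝ ∙ (x - y))ᗮ.reflection
  have hf : f x = y := Submodule.reflection_sub h
  calc cosineTransform (sphereMeasure F) x = ∫ u, |⟪f x, f u⟫| ∂sphereMeasure F := by
        simp only [f.inner_map_map, cosineTransform]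
    _ = cosineTransform (sphereMeasure F) y := by
        rw [hf, cosineTransform, (measurePreserving_sphereMeasure f).integral_comp
          f.toHomeomorph.measurableEmbedding fun u => |⟪y, u⟫|]

variable [FiniteDimensional ℝ F]

-- Stereographic projection from `v` maps the opposite hemisphere into a compact set, on which its
-- inverse is Lipschitz.
lemma hausdorffMeasure_hemisphere_lt_top {v : F} (hv : ‖v‖ = 1) :
    μH[(finrank ℝ F : ℝ) - 1] {x ∈ sphere (0 : F) 1 | ⟪v, x⟫ ≤ 0} < ∞ := by
  have := FiniteDimensional.proper_real F
  have hv0 : v ≠ 0 := norm_ne_zero_iff.1 (by simp [hv])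
  set S := {x ∈ sphere (0 : F) 1 | ⟪v, x⟫ ≤ 0}
  let φ : (ℝ ∙ v)ᗮ → F := stereoInvFunAux v ∘ (↑)
  have hS : IsCompact S :=
    (isCompact_sphere 0 1).inter_right (isClosed_le (innerSL ℝ v).continuous continuous_const)
  have hA : IsCompact (stereoToFun v '' S) := hS.image_of_continuousOn <|
    continuousOn_stereoToFun.mono fun x hx => (hx.2.trans_lt one_pos).ne
  have hcover : S ⊆ φ '' (stereoToFun v '' S) := fun x hx => by
    have hxv : x ≠ v := by
      rintro rfl
      exact absurd hx.2 (by rw [real_inner_self_eq_norm_sq, hv]; norm_num)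
    exact ⟨_, Set.mem_image_of_mem _ hx,
      congrArg Subtype.val (stereo_left_inv hv (x := ⟨x, hx.1⟩) hxv)⟩
  have hφ : ContDiff ℝ 1 φ := contDiff_stereoInvFunAux.comp (ℝ ∙ v)ᗮ.subtypeL.contDiff
  obtain ⟨K, hK⟩ := LocallyLipschitzOn.exists_lipschitzOnWith_of_compact hA
    hφ.locallyLipschitz.locallyLipschitzOn
  rw [← finrank_orthogonal_span_singleton_eq_sub_one hv0]
  calc μH[finrank ℝ (ℝ ∙ v)ᗮ] S ≤ μH[finrank ℝ (ℝ ∙ v)ᗮ] (φ '' (stereoToFun v '' S)) :=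
        measure_mono hcover
    _ ≤ K ^ (finrank ℝ (ℝ ∙ v)ᗮ : ℝ) * μH[finrank ℝ (ℝ ∙ v)ᗮ] (stereoToFun v '' S) :=
        hK.hausdorffMeasure_image_le (Nat.cast_nonneg _)
    _ < ∞ := ENNReal.mul_lt_top
        (ENNReal.rpow_lt_top_of_nonneg (Nat.cast_nonneg _) ENNReal.coe_ne_top) hA.measure_lt_top

variable [Nontrivial F]

instance isFiniteMeasure_sphereMeasure : IsFiniteMeasure (sphereMeasure F) := by
  obtain ⟨v, hv⟩ := exists_norm_eq F zero_le_one
  have hcover : sphere (0 : F) 1 ⊆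
      {x ∈ sphere (0 : F) 1 | ⟪v, x⟫ ≤ 0} ∪ {x ∈ sphere (0 : F) 1 | ⟪-v, x⟫ ≤ 0} := fun x hx =>
    (le_total ⟪v, x⟫ 0).imp (fun h => ⟨hx, h⟩) fun h => ⟨hx, by simpa using h⟩
  refine isFiniteMeasure_restrict.2 <|
    measure_ne_top_of_subset hcover (measure_union_lt_top ?_ ?_).ne
  · exact hausdorffMeasure_hemisphere_lt_top hv
  · exact hausdorffMeasure_hemisphere_lt_top (by rwa [norm_neg])

-- The orthogonal projection of the sphere onto a hyperplane contains the unit ball.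
lemma sphereMeasure_ne_zero : sphereMeasure F ≠ 0 := by
  obtain ⟨v, hv⟩ := exists_norm_eq F zero_le_one
  have hv0 : v ≠ 0 := norm_ne_zero_iff.1 (by simp [hv])
  set W := (ℝ ∙ v)ᗮ
  have hball : ball (0 : W) 1 ⊆ W.orthogonalProjectionOnto '' sphere 0 1 := fun y hy => by
    have hvW : W.orthogonalProjectionOnto v = 0 :=
      Submodule.orthogonalProjectionOnto_orthogonal_apply_eq_zero
        (Submodule.mem_span_singleton_self v)
    have hyv : ⟪(y : F), √(1 - ‖y‖ ^ 2) • v⟫ = 0 := by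
      rw [real_inner_smul_right, Submodule.mem_orthogonal_singleton_iff_inner_left.1 y.2, mul_zero]
    have hy1 : ‖y‖ ^ 2 ≤ 1 := pow_le_one₀ (norm_nonneg _) (mem_ball_zero_iff.1 hy).le
    refine ⟨y + √(1 - ‖y‖ ^ 2) • v, ?_, by simp [hvW]⟩
    rw [mem_sphere_zero_iff_norm, ← sq_eq_sq₀ (norm_nonneg _) zero_le_one,
      norm_add_sq_real, hyv, norm_smul, hv, mul_one, Real.norm_eq_abs, sq_abs,
      Real.sq_sqrt (sub_nonneg.2 hy1), Submodule.norm_coe]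
    ring
  have hproj : LipschitzWith 1 W.orthogonalProjectionOnto :=
    W.orthogonalProjectionOnto.lipschitz.weaken W.orthogonalProjectionOnto_norm_le
  have hpos : 0 < μH[finrank ℝ W] (sphere (0 : F) 1) := by
    calc 0 < μH[finrank ℝ W] (ball (0 : W) 1) := measure_ball_pos _ _ one_pos
      _ ≤ μH[finrank ℝ W] (W.orthogonalProjectionOnto '' sphere 0 1) := measure_mono hball
      _ ≤ μH[finrank ℝ W] (sphere (0 : F) 1) := by
        simpa using hproj.hausdorffMeasure_image_le (Nat.cast_nonneg _) (sphere 0 1)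
  rw [finrank_orthogonal_span_singleton_eq_sub_one hv0] at hpos
  rw [sphereMeasure, Ne, Measure.restrict_eq_zero]
  exact hpos.ne'

lemma sphere_subset_support_sphereMeasure : sphere (0 : F) 1 ⊆ (sphereMeasure F).support := by
  obtain ⟨x, hx⟩ := Measure.nonempty_support (sphereMeasure_ne_zero (F := F))
  have hx1 : x ∈ sphere (0 : F) 1 :=
    Measure.support_subset_of_isClosed isClosed_sphere (ae_mem_sphere_sphereMeasure F) hx
  intro y hy
  let f := (ℝ ∙ (y - x))ᗮ.reflection
  have hf : f y = x := Submodule.reflection_sub <| by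
    rw [mem_sphere_zero_iff_norm.1 hx1, mem_sphere_zero_iff_norm.1 hy]
  refine (Measure.mem_support_iff_forall _).2 fun U hU => ?_
  have hfU : f.symm ⁻¹' U ∈ nhds x :=
    f.symm.continuous.continuousAt (by rwa [← hf, f.symm_apply_apply])
  rw [← (measurePreserving_sphereMeasure f.symm).measure_preimage_emb
    f.symm.toHomeomorph.measurableEmbedding]
  exact (Measure.mem_support_iff_forall _).1 hx _ hfU

lemma integrable_sphereMeasure {G : Type*} [NormedAddCommGroup G] {g : F → G} (hg : Continuous g) :
    Integrable g (sphereMeasure F) := by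
  have := FiniteDimensional.proper_real F
  obtain ⟨C, hC⟩ := (isCompact_sphere (0 : F) 1).exists_bound_of_continuousOn hg.continuousOn
  exact .of_bound hg.aestronglyMeasurable C ((ae_mem_sphere_sphereMeasure F).mono hC)

lemma eq_on_sphere_of_integral_sphereMeasure_eq {f g : F → ℝ} (hf : Continuous f)
    (hg : Continuous g) (hle : f ≤ g)
    (heq : ∫ x, f x ∂sphereMeasure F = ∫ x, g x ∂sphereMeasure F) {x : F} (hx : ‖x‖ = 1) :
    f x = g x := by
  have hae := (integral_eq_iff_of_ae_le (integrable_sphereMeasure hf) (integrable_sphereMeasure hg)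
    (.of_forall hle)).1 heq
  exact Measure.support_subset_of_isClosed (isClosed_eq hf hg) hae
    (sphere_subset_support_sphereMeasure (mem_sphere_zero_iff_norm.2 hx))

variable (F) in
lemma exists_cosineTransform_sphereMeasure_eq :
    ∃ c > 0, ∀ x : F, cosineTransform (sphereMeasure F) x = c * ‖x‖ := by
  obtain ⟨v, hv⟩ := exists_norm_eq F zero_le_one
  refine ⟨cosineTransform (sphereMeasure F) v, ?_, fun x => ?_⟩
  · refine (integral_nonneg fun u => abs_nonneg _).lt_of_ne fun h => ?_
    have hzero : 0 = |⟪v, v⟫| := eq_on_sphere_of_integral_sphereMeasure_eq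
      (f := fun _ => 0) (g := fun u => |⟪v, u⟫|) continuous_const (by fun_prop)
      (fun u => abs_nonneg _) (by rw [integral_zero]; exact h) hv
    simp [hv] at hzero
  · calc cosineTransform (sphereMeasure F) x = cosineTransform (sphereMeasure F) (‖x‖ • v) :=
          cosineTransform_sphereMeasure_eq_of_norm_eq (by simp [norm_smul, hv])
      _ = cosineTransform (sphereMeasure F) v * ‖x‖ := by
          simp_rw [cosineTransform, real_inner_smul_left, abs_mul, abs_norm]
          rw [integral_const_mul, mul_comm]

end Sphere

section SphereAverage

open Module

variable {F : Type*} [NormedAddCommGroup F] [InnerProductSpace ℝ F] [FiniteDimensional ℝ F]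
  [Nontrivial F] [MeasurableSpace F] [BorelSpace F] {μ : Measure F} {c R : ℝ}

lemma integral_cosineTransform_sphereMeasure [SFinite μ] (hμ : Integrable (fun u => u) μ)
    (hc : ∀ x, cosineTransform (sphereMeasure F) x = c * ‖x‖) :
    ∫ x, cosineTransform μ x ∂sphereMeasure F = c * ∫ u, ‖u‖ ∂μ := by
  rw [integral_cosineTransform_comm hμ (integrable_sphereMeasure continuous_id),
    ← integral_const_mul]
  simp_rw [hc]

lemma integral_supportFun_cube_sphereMeasure {ι : Type*} [Fintype ι] (b : OrthonormalBasis ι ℝ F)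
    (hc : ∀ x, cosineTransform (sphereMeasure F) x = c * ‖x‖) :
    ∫ x, supportFun (cube b) x ∂sphereMeasure F = c * finrank ℝ F := by
  rw [integral_supportFun_cube b (integrable_sphereMeasure continuous_id),
    finrank_eq_card_basis b.toBasis]
  simp only [hc, b.norm_eq_one, mul_one, Finset.sum_const, Finset.card_univ, nsmul_eq_mul]
  exact mul_comm _ _

namespace IsIsotropic

variable [IsFiniteMeasure μ]

lemma integral_supportFun_essPolar_le (hμ : IsIsotropic μ) :
    ∫ x, supportFun (essPolar μ) x ∂sphereMeasure F ≤ ∫ x, cosineTransform μ x ∂sphereMeasure F :=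
  integral_mono (integrable_sphereMeasure hμ.continuous_supportFun_essPolar)
    (integrable_sphereMeasure (continuous_cosineTransform hμ.integrable_id))
    hμ.supportFun_essPolar_le

lemma integral_supportFun_essPolar_le_mul_cube (hμ : IsIsotropic μ) (hR0 : 0 < R)
    (hR : R ^ 2 * finrank ℝ F = μ.real Set.univ) {ι : Type*} [Fintype ι]
    (b : OrthonormalBasis ι ℝ F) :
    ∫ x, supportFun (essPolar μ) x ∂sphereMeasure F ≤
      R * ∫ x, supportFun (cube b) x ∂sphereMeasure F := by
  obtain ⟨c, hc0, hc⟩ := exists_cosineTransform_sphereMeasure_eq F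
  calc ∫ x, supportFun (essPolar μ) x ∂sphereMeasure F
      ≤ ∫ x, cosineTransform μ x ∂sphereMeasure F := hμ.integral_supportFun_essPolar_le
    _ = c * ∫ u, ‖u‖ ∂μ := integral_cosineTransform_sphereMeasure hμ.integrable_id hc
    _ ≤ c * (R * finrank ℝ F) := by gcongr; exact hμ.integral_norm_le hR0 hR
    _ = R * ∫ x, supportFun (cube b) x ∂sphereMeasure F := by
      rw [integral_supportFun_cube_sphereMeasure b hc, mul_left_comm]

lemma integral_supportFun_essPolar_eq_mul_cube_iff (hμ : IsIsotropic μ) (hR0 : 0 < R)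
    (hR : R ^ 2 * finrank ℝ F = μ.real Set.univ) {ι : Type*} [Fintype ι]
    (b : OrthonormalBasis ι ℝ F) :
    ∫ x, supportFun (essPolar μ) x ∂sphereMeasure F =
        R * ∫ x, supportFun (cube b) x ∂sphereMeasure F ↔
      ∃ b' : OrthonormalBasis (Fin (finrank ℝ F)) ℝ F, essPolar μ = R • cube b' := by
  obtain ⟨c, hc0, hc⟩ := exists_cosineTransform_sphereMeasure_eq F
  have hcos := integral_cosineTransform_sphereMeasure hμ.integrable_id hc
  rw [integral_supportFun_cube_sphereMeasure b hc, mul_left_comm]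
  constructor
  · intro heq
    have hnorm : ∫ u, ‖u‖ ∂μ = R * finrank ℝ F :=
      (hμ.integral_norm_le hR0 hR).antisymm <| le_of_mul_le_mul_left (by
        rw [← heq, ← hcos]
        exact hμ.integral_supportFun_essPolar_le) hc0
    refine hμ.exists_essPolar_eq_smul_cube hR0
      (hμ.mul_norm_eq_one_of_integral_norm_eq hR hnorm) fun x hx => ?_
    exact eq_on_sphere_of_integral_sphereMeasure_eq hμ.continuous_supportFun_essPolar
      (continuous_cosineTransform hμ.integrable_id) hμ.supportFun_essPolar_le
      (by rw [heq, hcos, hnorm]) hx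
  · rintro ⟨b', hb'⟩
    simp_rw [hb', supportFun_smul hR0.le]
    rw [integral_const_mul, integral_supportFun_cube_sphereMeasure b' hc, mul_left_comm]

end IsIsotropic

end SphereAverage

section Subspace

open Module Metric

variable {n : ℕ} {H : Submodule ℝ (EuclideanSpace ℝ (Fin n))}

lemma suppFn_image_coe (K : Set H) (x : H) : suppFn (Subtype.val '' K) x = supportFun K x := by
  rw [suppFn, Set.image_image]
  rfl

lemma isCube_finrank_iff {S : Set (EuclideanSpace ℝ (Fin n))} :
    IsCube H (finrank ℝ H) S ↔
      ∃ b : OrthonormalBasis (Fin (finrank ℝ H)) ℝ H, S = Subtype.val '' cube b := by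
  have himage (b : OrthonormalBasis (Fin (finrank ℝ H)) ℝ H) :
      Subtype.val '' cube b = {x | x ∈ H ∧ ∀ i, |⟪x, b i⟫| ≤ 1} := by
    ext x
    simp [cube, real_inner_comm, Submodule.coe_inner, and_comm]
  constructor
  · rintro ⟨v, hv, hvH, rfl⟩
    have hvH' : Orthonormal ℝ fun i => (⟨v i, hvH i⟩ : H) := hv.codRestrict _ hvH
    have hspan := hvH'.linearIndependent.span_eq_top_of_card_eq_finrank' (Fintype.card_fin _)
    exact ⟨.mk hvH' hspan.ge, by simp [himage]⟩
  · rintro ⟨b, rfl⟩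
    exact ⟨fun i => b i, b.orthonormal.comp_linearIsometry H.subtypeₗᵢ, fun i => (b i).2, himage b⟩

lemma meanWidthIn_image_coe [Nontrivial H] (K : Set H) :
    meanWidthIn H (finrank ℝ H) (Subtype.val '' K) =
      2 / (finrank ℝ H * omegaBall (finrank ℝ H)) * ∫ x, supportFun K x ∂sphereMeasure H := by
  have hdim : (0 : ℝ) ≤ finrank ℝ H - 1 := sub_nonneg.2 (Nat.one_le_cast.2 finrank_pos)
  have hmap := H.subtypeₗᵢ.isometry.map_hausdorffMeasure (.inl hdim)
  have hemb : MeasurableEmbedding (Subtype.val : H → EuclideanSpace ℝ (Fin n)) :=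
    .subtype_coe H.closed_of_finiteDimensional.measurableSet
  rw [H.coe_subtypeₗᵢ, Submodule.coe_subtype, Subtype.range_coe] at hmap
  rw [meanWidthIn, ← Measure.restrict_restrict isClosed_sphere.measurableSet, ← hmap,
    hemb.setIntegral_map]
  simp_rw [suppFn_image_coe]
  rfl

lemma omegaBall_pos (k : ℕ) : 0 < omegaBall k :=
  ENNReal.toReal_pos (measure_ball_pos _ _ one_pos).ne' measure_ball_lt_top.ne

lemma msupport_eq_support {α : Type*} [TopologicalSpace α] [MeasurableSpace α] (μ : Measure α) :
    msupport μ = μ.support :=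
  Set.ext fun x => (Measure.mem_support_iff_forall x).symm

variable {μ : Measure (EuclideanSpace ℝ (Fin n))}

lemma polarBody_convexHull (T : Set (EuclideanSpace ℝ (Fin n))) :
    polarBody (convexHull ℝ T) = polarBody T :=
  Set.ext fun x => ⟨fun h y hy => h y (subset_convexHull ℝ T hy), fun h _ hy =>
    convexHull_min h (convex_halfSpace_le (innerSL ℝ x).isLinear 1) hy⟩

lemma polarBody_msupport (heven : μ.map (fun u => -u) = μ) :
    polarBody (msupport μ) = essPolar μ := by
  ext x
  rw [msupport_eq_support]
  refine ⟨fun h => ?_, fun h u hu =>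
    (le_abs_self _).trans (mem_essPolar_iff_forall_support.1 h u hu)⟩
  have hle : ∀ᵐ u ∂μ, ⟪x, u⟫ ≤ 1 := by
    filter_upwards [Measure.support_mem_ae] with u hu using h u hu
  have hle_neg : ∀ᵐ u ∂μ, ⟪x, -u⟫ ≤ 1 := by
    rw [← heven] at hle
    exact ae_of_ae_map (by fun_prop) hle
  filter_upwards [hle, hle_neg] with u hu hu'
  rw [inner_neg_right] at hu'
  exact abs_le.2 ⟨by linarith, hu⟩

lemma polarBody_convexHull_msupport_inter (heven : μ.map (fun u => -u) = μ) :
    polarBody (convexHull ℝ (msupport μ)) ∩ H =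
      Subtype.val '' essPolar (μ.map H.orthogonalProjectionOnto) := by
  rw [polarBody_convexHull, polarBody_msupport heven]
  ext x
  simp [mem_essPolar_map_orthogonalProjectionOnto]

lemma exists_isCube_image_eq_smul_iff {K : Set H} {r : ℝ} :
    (∃ B', IsCube H (finrank ℝ H) B' ∧ Subtype.val '' K = r • B') ↔
      ∃ b : OrthonormalBasis (Fin (finrank ℝ H)) ℝ H, K = r • cube b := by
  simp_rw [isCube_finrank_iff]
  have hsmul (S : Set H) : r • Subtype.val '' S = Subtype.val '' (r • S) :=
    (Set.image_smul_comm Subtype.val r S fun _ => rfl).symm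
  constructor
  · rintro ⟨_, ⟨b, rfl⟩, h⟩
    exact ⟨b, Subtype.val_injective.image_injective (h.trans (hsmul _))⟩
  · rintro ⟨b, rfl⟩
    exact ⟨_, ⟨b, rfl⟩, (hsmul _).symm⟩

lemma IsIsotropic.meanWidthIn_essPolar_le_and_eq_iff [Nontrivial H] {ν : Measure H}
    [IsFiniteMeasure ν] (hν : IsIsotropic ν) (b : OrthonormalBasis (Fin (finrank ℝ H)) ℝ H) :
    meanWidthIn H (finrank ℝ H) (Subtype.val '' essPolar ν) ≤
        √(ν.real Set.univ / finrank ℝ H) * meanWidthIn H (finrank ℝ H) (Subtype.val '' cube b) ∧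
      (meanWidthIn H (finrank ℝ H) (Subtype.val '' essPolar ν) =
          √(ν.real Set.univ / finrank ℝ H) * meanWidthIn H (finrank ℝ H) (Subtype.val '' cube b) ↔
        ∃ b' : OrthonormalBasis (Fin (finrank ℝ H)) ℝ H,
          essPolar ν = √(ν.real Set.univ / finrank ℝ H) • cube b') := by
  have hk : 0 < (finrank ℝ H : ℝ) := Nat.cast_pos.2 finrank_pos
  have hmass := hν.measureReal_univ_pos
  have hR0 : 0 < √(ν.real Set.univ / finrank ℝ H) := by positivity
  have hR : √(ν.real Set.univ / finrank ℝ H) ^ 2 * finrank ℝ H = ν.real Set.univ := by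
    rw [Real.sq_sqrt (by positivity), div_mul_cancel₀ _ hk.ne']
  have hfactor : 0 < 2 / (finrank ℝ H * omegaBall (finrank ℝ H)) :=
    div_pos two_pos (mul_pos hk (omegaBall_pos _))
  rw [meanWidthIn_image_coe, meanWidthIn_image_coe, mul_left_comm √_,
    mul_le_mul_iff_right₀ hfactor, mul_right_inj' hfactor.ne']
  exact ⟨hν.integral_supportFun_essPolar_le_mul_cube hR0 hR b,
    hν.integral_supportFun_essPolar_eq_mul_cube_iff hR0 hR b⟩

end Subspace

theorem stmt14_general (n k : ℕ) (μ : Measure (EuclideanSpace ℝ (Fin n))) [IsFiniteMeasure μ]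
    (hiso : IsIsotropic μ)
    (heven : Measure.map (fun u => -u) μ = μ)
    (H : Submodule ℝ (EuclideanSpace ℝ (Fin n))) (hH : Module.finrank ℝ H = k)
    (C : Set (EuclideanSpace ℝ (Fin n))) (hC : C = convexHull ℝ (msupport μ))
    (B : Set (EuclideanSpace ℝ (Fin n))) (hB : IsCube H k B) :
    meanWidthIn H k (polarBody C ∩ (H : Set (EuclideanSpace ℝ (Fin n)))) ≤
        √(μ.real Set.univ / k) * meanWidthIn H k B ∧
      (meanWidthIn H k (polarBody C ∩ (H : Set (EuclideanSpace ℝ (Fin n)))) =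
          √(μ.real Set.univ / k) * meanWidthIn H k B ↔
        ∃ B' : Set (EuclideanSpace ℝ (Fin n)), IsCube H k B' ∧
          polarBody C ∩ (H : Set (EuclideanSpace ℝ (Fin n))) = √(μ.real Set.univ / k) • B') := by
  subst hH hC
  obtain ⟨b, rfl⟩ := isCube_finrank_iff.1 hB
  set ν := μ.map H.orthogonalProjectionOnto with hνdef
  have hν : IsIsotropic ν := hiso.map_orthogonalProjectionOnto H
  have hmass : μ.real Set.univ = ν.real Set.univ := by
    rw [hνdef, map_measureReal_apply (by fun_prop) .univ, Set.preimage_univ]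
  rw [polarBody_convexHull_msupport_inter heven, exists_isCube_image_eq_smul_iff, hmass]
  rcases subsingleton_or_nontrivial H with hH | hH
  · have hzero (K) : meanWidthIn H (Module.finrank ℝ H) K = 0 := by
      simp [meanWidthIn, Module.finrank_zero_of_subsingleton]
    have hcube : (cube b).Nonempty := ⟨0, by simp [cube]⟩
    simp only [hzero, mul_zero, le_refl, true_and, true_iff]
    exact ⟨b, (Subsingleton.eq_univ_of_nonempty ⟨0, zero_mem_essPolar ν⟩).trans
      (Subsingleton.eq_univ_of_nonempty hcube.smul_set).symm⟩
  · exact hν.meanWidthIn_essPolar_le_and_eq_iff b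

theorem stmt14 (n k : ℕ) (μ : Measure (EuclideanSpace ℝ (Fin n))) [IsFiniteMeasure μ]
    (hsph : μ (Metric.sphere (0 : EuclideanSpace ℝ (Fin n)) 1)ᶜ = 0)
    (hiso : ∀ x : EuclideanSpace ℝ (Fin n), ∫ u, ⟪x, u⟫ ^ 2 ∂μ = ‖x‖ ^ 2)
    (heven : Measure.map (fun u => -u) μ = μ)
    (H : Submodule ℝ (EuclideanSpace ℝ (Fin n))) (hH : Module.finrank ℝ H = k)
    (C : Set (EuclideanSpace ℝ (Fin n))) (hC : C = convexHull ℝ (msupport μ))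
    (B : Set (EuclideanSpace ℝ (Fin n))) (hB : IsCube H k B) :
    meanWidthIn H k (polarBody C ∩ (H : Set (EuclideanSpace ℝ (Fin n)))) ≤
        Real.sqrt ((n : ℝ) / k) * meanWidthIn H k B ∧
      (meanWidthIn H k (polarBody C ∩ (H : Set (EuclideanSpace ℝ (Fin n)))) =
          Real.sqrt ((n : ℝ) / k) * meanWidthIn H k B ↔
        ∃ B' : Set (EuclideanSpace ℝ (Fin n)), IsCube H k B' ∧
          polarBody C ∩ (H : Set (EuclideanSpace ℝ (Fin n))) =
            Real.sqrt ((n : ℝ) / k) • B') := by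
  simpa only [IsIsotropic.measureReal_univ_of_sphere hiso hsph, finrank_euclideanSpace_fin] using
    stmt14_general n k μ hiso heven H hH C hC B hB
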